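/- Suppose X'X/n → Q with Q symmetric positive definite, and let β⁽ⁿ⁾ be a sequence of parameters with ‖√n β₂⁽ⁿ⁾‖ → ∞ as n → ∞. Then the distribution of √n(β̃ − β⁽ⁿ⁾) under P_{n,β⁽ⁿ⁾,σ} converges weakly to the N(0, σ²Q⁻¹) distribution on ℝ^k. -/

import Mathlib

open MeasureTheory Matrix Real Filter Topology ENNReal NNReal

noncomputable section

/-- Euclidean norm of a finite tuple. -/
def enorm2 {ι : Type*} [Fintype ι] (v : ι → ℝ) : ℝ := Real.sqrt (∑ i, v i ^ 2)

/-- The `N(0, σ² I)` distribution on `ι → ℝ`, given by its Lebesgue density. -/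
def gaussPi (ι : Type*) [Fintype ι] (σ2 : ℝ) : Measure (ι → ℝ) :=
  volume.withDensity fun x => ENNReal.ofReal
    ((2 * π * σ2) ^ (-(Fintype.card ι : ℝ) / 2) * Real.exp (-(enorm2 x) ^ 2 / (2 * σ2)))

/-- The Lebesgue density of the `N(0, σ² Q⁻¹)` distribution on `ι → ℝ`
(for `Q` symmetric positive definite). -/
def gaussCovDens {ι : Type*} [Fintype ι] [DecidableEq ι] (σ2 : ℝ) (Q : Matrix ι ι ℝ)
    (x : ι → ℝ) : ℝ :=
  (2 * π * σ2) ^ (-(Fintype.card ι : ℝ) / 2) * Real.sqrt Q.det *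
    Real.exp (-(x ⬝ᵥ Q.mulVec x) / (2 * σ2))

/-- The `N(0, σ² Q⁻¹)` distribution on `ι → ℝ` (for `Q` symmetric positive definite),
given by its Lebesgue density. -/
def gaussCov {ι : Type*} [Fintype ι] [DecidableEq ι] (σ2 : ℝ) (Q : Matrix ι ι ℝ) :
    Measure (ι → ℝ) :=
  volume.withDensity fun x => ENNReal.ofReal (gaussCovDens σ2 Q x)

open Classical in
/-- Symmetric positive semidefinite square root (junk value `0` off the psd cone). -/
def msqrt {ι : Type*} [Fintype ι] [DecidableEq ι] (A : Matrix ι ι ℝ) : Matrix ι ι ℝ :=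
  if h : A.PosSemidef then
    h.1.eigenvectorUnitary.1 * diagonal (Real.sqrt ∘ h.1.eigenvalues) *
      (star h.1.eigenvectorUnitary : Matrix ι ι ℝ)
  else 0

open Classical in
/-- Smallest eigenvalue of a symmetric matrix (junk value `0` otherwise). -/
def lamMin {ι : Type*} [Fintype ι] [DecidableEq ι] (A : Matrix ι ι ℝ) : ℝ :=
  if h : A.IsHermitian then ⨅ i, h.eigenvalues i else 0

open Classical in
/-- Largest eigenvalue of a symmetric matrix (junk value `0` otherwise). -/
def lamMax {ι : Type*} [Fintype ι] [DecidableEq ι] (A : Matrix ι ι ℝ) : ℝ :=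
  if h : A.IsHermitian then ⨆ i, h.eigenvalues i else 0

variable {n k₁ k₂ : ℕ}

/-- First block of columns of the design matrix. -/
def X1 (X : Matrix (Fin n) (Fin k₁ ⊕ Fin k₂) ℝ) : Matrix (Fin n) (Fin k₁) ℝ :=
  X.submatrix id Sum.inl

/-- Second block of columns of the design matrix. -/
def X2 (X : Matrix (Fin n) (Fin k₁ ⊕ Fin k₂) ℝ) : Matrix (Fin n) (Fin k₂) ℝ :=
  X.submatrix id Sum.inr

/-- Unrestricted least squares estimator. -/
def betaU (X : Matrix (Fin n) (Fin k₁ ⊕ Fin k₂) ℝ) (Y : Fin n → ℝ) : (Fin k₁ ⊕ Fin k₂) → ℝ :=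
  (Xᵀ * X)⁻¹.mulVec (Xᵀ.mulVec Y)

/-- Restricted least squares estimator. -/
def betaR (X : Matrix (Fin n) (Fin k₁ ⊕ Fin k₂) ℝ) (Y : Fin n → ℝ) : (Fin k₁ ⊕ Fin k₂) → ℝ :=
  Sum.elim (((X1 X)ᵀ * X1 X)⁻¹.mulVec ((X1 X)ᵀ.mulVec Y)) (fun _ => 0)

/-- Risk estimate of the restricted model. -/
def rR (X : Matrix (Fin n) (Fin k₁ ⊕ Fin k₂) ℝ) (σ2 : ℝ) (Y : Fin n → ℝ) : ℝ :=
  Y ⬝ᵥ Y - betaR X Y ⬝ᵥ (Xᵀ * X).mulVec (betaR X Y) + σ2 * (2 * k₁ - n)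

/-- Risk estimate of the unrestricted model. -/
def rU (X : Matrix (Fin n) (Fin k₁ ⊕ Fin k₂) ℝ) (σ2 : ℝ) (Y : Fin n → ℝ) : ℝ :=
  Y ⬝ᵥ Y - betaU X Y ⬝ᵥ (Xᵀ * X).mulVec (betaU X Y) + σ2 * (2 * (k₁ + k₂) - n)

/-- The model averaging weight `λ̂`. -/
def lamHat (α σ2 : ℝ) (X : Matrix (Fin n) (Fin k₁ ⊕ Fin k₂) ℝ) (Y : Fin n → ℝ) : ℝ :=
  Real.exp (-(α * rR X σ2 Y) / σ2) /
    (Real.exp (-(α * rR X σ2 Y) / σ2) + Real.exp (-(α * rU X σ2 Y) / σ2))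

/-- Leung and Barron's model averaging estimator `β̃`. -/
def mavg (α σ2 : ℝ) (X : Matrix (Fin n) (Fin k₁ ⊕ Fin k₂) ℝ) (Y : Fin n → ℝ) :
    (Fin k₁ ⊕ Fin k₂) → ℝ :=
  lamHat α σ2 X Y • betaR X Y + (1 - lamHat α σ2 X Y) • betaU X Y

/-- Projection on the column space of `X₁`. -/
def projR (X : Matrix (Fin n) (Fin k₁ ⊕ Fin k₂) ℝ) : Matrix (Fin n) (Fin n) ℝ :=
  X1 X * ((X1 X)ᵀ * X1 X)⁻¹ * (X1 X)ᵀ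

/-- Projection on the column space of `X`. -/
def projU (X : Matrix (Fin n) (Fin k₁ ⊕ Fin k₂) ℝ) : Matrix (Fin n) (Fin n) ℝ :=
  X * (Xᵀ * X)⁻¹ * Xᵀ

/-- The distribution `P_{n,β,σ}` of `Y = Xβ + u`, `u ~ N(0, σ² Iₙ)`. -/
def Pmeas (X : Matrix (Fin n) (Fin k₁ ⊕ Fin k₂) ℝ) (β : (Fin k₁ ⊕ Fin k₂) → ℝ) (σ2 : ℝ) :
    Measure (Fin n → ℝ) :=
  (gaussPi (Fin n) σ2).map (fun u => X.mulVec β + u)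

/-- The function `h_{a,b}(ξ) = ξ / (1 + a exp(−ξ²/b))`. -/
def hfun (a b ξ : ℝ) : ℝ := ξ / (1 + a * Real.exp (-ξ ^ 2 / b))

/-- The inverse `g_{a,b}` of `h_{a,b}`. -/
def gfun (a b : ℝ) : ℝ → ℝ := Function.invFun (hfun a b)

open Classical in
/-- `g(‖w‖) w / ‖w‖`, with the convention that this is `0` for `w = 0`. -/
def gdir (a b : ℝ) {ι : Type*} [Fintype ι] (w : ι → ℝ) : ι → ℝ :=
  if w = 0 then 0 else (gfun a b (enorm2 w) / enorm2 w) • w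


/-- The finite-sample density `f_{n,β,σ}` of `√n(β̃ − β)` (Theorem 3 of the paper). -/
def fdens {n k₁ k₂ : ℕ} (X : Matrix (Fin n) (Fin k₁ ⊕ Fin k₂) ℝ)
    (β : (Fin k₁ ⊕ Fin k₂) → ℝ) (σ2 α : ℝ) (t : (Fin k₁ ⊕ Fin k₂) → ℝ) : ℝ :=
  let a := Real.exp (2 * α * k₂)
  let b := σ2 / α
  let S := (X2 X)ᵀ * (1 - projR X) * X2 X
  let w := (Real.sqrt n)⁻¹ • (msqrt S).mulVec ((t ∘ Sum.inr) + Real.sqrt n • (β ∘ Sum.inr))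
  (2 * π * σ2) ^ (-((k₁ : ℝ) + k₂) / 2) * Real.sqrt (((n : ℝ)⁻¹ • (Xᵀ * X)).det) *
    Real.exp (-(enorm2 ((Real.sqrt n)⁻¹ •
        ((msqrt ((X1 X)ᵀ * X1 X)).mulVec (t ∘ Sum.inl) +
          ((msqrt ((X1 X)ᵀ * X1 X))⁻¹ * (X1 X)ᵀ * X2 X).mulVec (t ∘ Sum.inr)))) ^ 2 /
      (2 * σ2)) *
    (1 + Real.exp (-(α / σ2) * gfun a b (enorm2 w) ^ 2 + 2 * α * k₂)) ^ (k₂ : ℕ) *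
    (1 + (2 * α / σ2) * gfun a b (enorm2 w) ^ 2 *
        (1 + Real.exp ((α / σ2) * gfun a b (enorm2 w) ^ 2 - 2 * α * k₂))⁻¹)⁻¹ *
    Real.exp (-(enorm2 (gdir a b w - (msqrt S).mulVec (β ∘ Sum.inr))) ^ 2 / (2 * σ2))

/-- The density `f_{∞,γ}` of the limiting distribution (formula (13) of the paper),
stated for a general symmetric positive definite matrix in place of `Q`. -/
def fInfty {k₁ k₂ : ℕ} (Q : Matrix (Fin k₁ ⊕ Fin k₂) (Fin k₁ ⊕ Fin k₂) ℝ) (σ2 α : ℝ)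
    (γ : Fin k₂ → ℝ) (t : (Fin k₁ ⊕ Fin k₂) → ℝ) : ℝ :=
  let a := Real.exp (2 * α * k₂)
  let b := σ2 / α
  let S := Q.toBlocks₂₂ - Q.toBlocks₂₁ * Q.toBlocks₁₁⁻¹ * Q.toBlocks₁₂
  let w := (msqrt S).mulVec ((t ∘ Sum.inr) + γ)
  (2 * π * σ2) ^ (-((k₁ : ℝ) + k₂) / 2) * Real.sqrt Q.det *
    Real.exp (-(enorm2 ((msqrt Q.toBlocks₁₁).mulVec (t ∘ Sum.inl) +
        ((msqrt Q.toBlocks₁₁)⁻¹ * Q.toBlocks₁₂).mulVec (t ∘ Sum.inr))) ^ 2 / (2 * σ2)) *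
    (1 + Real.exp (-(α / σ2) * gfun a b (enorm2 w) ^ 2 + 2 * α * k₂)) ^ (k₂ : ℕ) *
    (1 + (2 * α / σ2) * gfun a b (enorm2 w) ^ 2 *
        (1 + Real.exp ((α / σ2) * gfun a b (enorm2 w) ^ 2 - 2 * α * k₂))⁻¹)⁻¹ *
    Real.exp (-(enorm2 (gdir a b w - (msqrt S).mulVec γ)) ^ 2 / (2 * σ2))

/-!
The estimator `β̃` depends on the data only through `β̂(U)`, and `t = √n(β̂(U) − β)` is exactly
`N(0, σ²(X'X/n)⁻¹)` distributed. As a function of `t`, the error `√n(β̃ − β)` differs from `t` by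
`λ̂` times a vector of length `r = ‖√n(β̂(R) − β̂(U))‖`. Since `β̂(R)` has zero second block,
`r ≥ ‖√n β₂ + t₂‖ → ∞`, whereas Pythagoras for the least squares projections gives
`λ̂ ≤ exp(2αk₂ − αc r²/σ²)` with `c` a uniform lower bound on the spectrum of `X'X/n`. So the error
tends to `t` pointwise, and dominated convergence applies because the densities of `t` converge
under a common Gaussian bound.
-/

lemma enorm2_eq_norm_toLp {ι : Type*} [Fintype ι] (v : ι → ℝ) :
    enorm2 v = ‖WithLp.toLp 2 v‖ := by
  simp [enorm2, EuclideanSpace.norm_eq]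

lemma enorm2_sq {ι : Type*} [Fintype ι] (v : ι → ℝ) : enorm2 v ^ 2 = v ⬝ᵥ v := by
  rw [enorm2_eq_norm_toLp, EuclideanSpace.real_norm_sq_eq]
  exact Finset.sum_congr rfl fun i _ => sq (v i)

lemma enorm2_smul {ι : Type*} [Fintype ι] (a : ℝ) (v : ι → ℝ) :
    enorm2 (a • v) = |a| * enorm2 v := by
  rw [enorm2_eq_norm_toLp, enorm2_eq_norm_toLp, WithLp.toLp_smul, norm_smul, Real.norm_eq_abs]

lemma enorm2_comp_le {ι κ : Type*} [Fintype ι] [Fintype κ] {e : κ → ι}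
    (he : Function.Injective e) (v : ι → ℝ) : enorm2 (v ∘ e) ≤ enorm2 v := by
  classical
  refine Real.sqrt_le_sqrt ?_
  calc ∑ j, v (e j) ^ 2 = ∑ i ∈ Finset.univ.map ⟨e, he⟩, v i ^ 2 := by
        rw [Finset.sum_map, Function.Embedding.coeFn_mk]
    _ ≤ ∑ i, v i ^ 2 :=
        Finset.sum_le_univ_sum_of_nonneg fun i => sq_nonneg (v i)

lemma tendsto_enorm2_add_const_atTop {ι κ : Type*} [Fintype ι] {l : Filter κ} {v : κ → ι → ℝ}
    (hv : Tendsto (fun j => enorm2 (v j)) l atTop) (w : ι → ℝ) :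
    Tendsto (fun j => enorm2 (v j + w)) l atTop := by
  simp only [enorm2_eq_norm_toLp, WithLp.toLp_add] at hv ⊢
  exact tendsto_atTop_mono (fun j => norm_sub_le_norm_add (WithLp.toLp 2 (v j)) _)
    (tendsto_atTop_add_const_right l _ hv)

lemma tendsto_of_tendsto_enorm2_sub {ι κ : Type*} [Fintype ι] {l : Filter κ}
    {v : κ → ι → ℝ} {w : ι → ℝ} (h : Tendsto (fun j => enorm2 (v j - w)) l (𝓝 0)) :
    Tendsto v l (𝓝 w) := by
  simp only [enorm2_eq_norm_toLp, WithLp.toLp_sub] at h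
  exact ((PiLp.continuous_ofLp 2 _).tendsto _).comp (tendsto_iff_norm_sub_tendsto_zero.mpr h)

lemma eventually_forall_dotProduct_mulVec_pos {ι : Type*} [Fintype ι] {Q : Matrix ι ι ℝ}
    (hQ : Q.PosDef) : ∀ᶠ M in 𝓝 Q, ∀ x : ι → ℝ, x ≠ 0 → 0 < x ⬝ᵥ M *ᵥ x := by
  have hcont : Continuous fun p : Matrix ι ι ℝ × (ι → ℝ) => p.2 ⬝ᵥ p.1 *ᵥ p.2 := by fun_prop
  have hsphere : ∀ᶠ M in 𝓝 Q, ∀ x ∈ Metric.sphere (0 : ι → ℝ) 1, 0 < x ⬝ᵥ M *ᵥ x :=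
    (isCompact_sphere 0 1).eventually_forall_of_forall_eventually fun x hx =>
      hcont.continuousAt.eventually_const_lt <| by
        simpa using hQ.dotProduct_mulVec_pos (ne_zero_of_mem_unit_sphere ⟨x, hx⟩)
  filter_upwards [hsphere] with M hM x hx
  have hunit := hM (‖x‖⁻¹ • x) (by simp [norm_smul, hx])
  rw [mulVec_smul, smul_dotProduct, dotProduct_smul, smul_smul, smul_eq_mul] at hunit
  exact pos_of_mul_pos_right hunit (by positivity)

lemma exists_pos_eventually_forall_mul_dotProduct_self_le {ι : Type*} [Fintype ι]
    {Q : Matrix ι ι ℝ} (hQ : Q.PosDef) :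
    ∃ c : ℝ, 0 < c ∧ ∀ᶠ M in 𝓝 Q, ∀ x : ι → ℝ, c * (x ⬝ᵥ x) ≤ x ⬝ᵥ M *ᵥ x := by
  classical
  have hshift : Tendsto (fun p : ℝ × Matrix ι ι ℝ => p.2 - p.1 • (1 : Matrix ι ι ℝ))
      (𝓝 0 ×ˢ 𝓝 Q) (𝓝 Q) := by
    rw [← nhds_prod_eq]
    exact Continuous.tendsto' (by fun_prop) _ _ (by simp)
  have hpos := (hshift.eventually (eventually_forall_dotProduct_mulVec_pos hQ)).curry
  obtain ⟨c, hc, hc_pos⟩ :=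
    ((hpos.filter_mono nhdsWithin_le_nhds).and (self_mem_nhdsWithin (s := Set.Ioi 0))).exists
  refine ⟨c, hc_pos, hc.mono fun M hM x => ?_⟩
  rcases eq_or_ne x 0 with rfl | hx
  · simp
  · have := hM x hx
    rw [sub_mulVec, smul_mulVec, one_mulVec, dotProduct_sub, dotProduct_smul, smul_eq_mul] at this
    exact (sub_pos.mp this).le

lemma posDef_transpose_mul_self_of_rank_eq_card {ι κ : Type*} [Fintype ι] [Fintype κ]
    {X : Matrix ι κ ℝ} (hX : X.rank = Fintype.card κ) : (Xᵀ * X).PosDef := by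
  rw [← conjTranspose_eq_transpose_of_trivial]
  refine Matrix.PosDef.conjTranspose_mul_self X (Matrix.mulVec_injective_iff.mpr ?_)
  rw [linearIndependent_iff_card_eq_finrank_span, ← hX, Matrix.rank_eq_finrank_span_cols]
  rfl

lemma mulVec_dotProduct_mulVec_self {ι κ : Type*} [Fintype ι] [Fintype κ] (M : Matrix ι κ ℝ)
    (x : κ → ℝ) : M *ᵥ x ⬝ᵥ M *ᵥ x = x ⬝ᵥ (Mᵀ * M) *ᵥ x := by
  rw [← mulVec_mulVec, dotProduct_mulVec x Mᵀ, vecMul_transpose]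

open scoped MatrixOrder Matrix.Norms.L2Operator in
lemma exists_eq_transpose_mul_self_of_posSemidef {ι : Type*} [Fintype ι]
    {Q : Matrix ι ι ℝ} (hQ : Q.PosSemidef) : ∃ B : Matrix ι ι ℝ, Q = Bᵀ * B := by
  classical
  obtain ⟨B, hB⟩ := CStarAlgebra.nonneg_iff_eq_star_mul_self.mp hQ.nonneg
  exact ⟨B, hB⟩

lemma gram_inv_mul_transpose_mul_transpose {ι κ : Type*} [Fintype ι] [Fintype κ] [DecidableEq κ]
    {X : Matrix ι κ ℝ} (hX : IsUnit (Xᵀ * X).det) :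
    ((Xᵀ * X)⁻¹ * Xᵀ) * ((Xᵀ * X)⁻¹ * Xᵀ)ᵀ = (Xᵀ * X)⁻¹ := by
  rw [transpose_mul, transpose_transpose, transpose_nonsing_inv, transpose_mul,
    transpose_transpose, Matrix.mul_assoc, ← Matrix.mul_assoc Xᵀ, mul_nonsing_inv _ hX,
    Matrix.mul_one]

lemma tendsto_mul_exp_neg_mul_sq_atTop {a : ℝ} (ha : 0 < a) :
    Tendsto (fun r : ℝ => r * Real.exp (-a * r ^ 2)) atTop (𝓝 0) := by
  have h := tendsto_rpow_abs_mul_exp_neg_mul_sq_cocompact ha 1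
  simp only [Real.rpow_one] at h
  refine (h.mono_left atTop_le_cocompact).congr' ?_
  filter_upwards [eventually_ge_atTop 0] with r hr
  rw [abs_of_nonneg hr]

lemma integrable_exp_neg_mul_dotProduct_self {ι : Type*} [Fintype ι] {b : ℝ} (hb : 0 < b) :
    Integrable fun x : ι → ℝ => Real.exp (-b * (x ⬝ᵥ x)) := by
  simp only [dotProduct, ← sq, Finset.mul_sum, Real.exp_sum]
  exact Integrable.fintype_prod fun _ => integrable_exp_neg_mul_sq hb

lemma pi_withDensity_ofReal {ι : Type*} [Fintype ι] {E : ι → Type*}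
    [∀ i, MeasurableSpace (E i)] {μ : ∀ i, Measure (E i)} [∀ i, SigmaFinite (μ i)]
    {p : ∀ i, E i → ℝ} (hp : ∀ i, Integrable (p i) (μ i)) (hp_nonneg : ∀ i x, 0 ≤ p i x) :
    Measure.pi (fun i => (μ i).withDensity fun x => ENNReal.ofReal (p i x)) =
      (Measure.pi μ).withDensity fun x => ENNReal.ofReal (∏ i, p i (x i)) := by
  refine Measure.pi_eq fun s hs => ?_
  rw [withDensity_apply _ (MeasurableSet.univ_pi hs), Measure.restrict_pi_pi,
    ← ofReal_integral_eq_lintegral_ofReal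
      (Integrable.fintype_prod_dep fun i => (hp i).restrict)
      (ae_of_all _ fun x => Finset.prod_nonneg fun i _ => hp_nonneg i (x i)),
    integral_fintype_prod_eq_prod,
    ENNReal.ofReal_prod_of_nonneg fun i _ => integral_nonneg (hp_nonneg i)]
  refine Finset.prod_congr rfl fun i _ => ?_
  rw [withDensity_apply _ (hs i), ofReal_integral_eq_lintegral_ofReal (hp i).restrict
    (ae_of_all _ (hp_nonneg i))]

lemma gaussPi_eq_pi_gaussianReal (ι : Type*) [Fintype ι] {v : ℝ≥0} (hv : v ≠ 0) :
    gaussPi ι v = Measure.pi fun _ => ProbabilityTheory.gaussianReal 0 v := by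
  simp only [ProbabilityTheory.gaussianReal_of_var_ne_zero 0 hv, ProbabilityTheory.gaussianPDF_def]
  rw [pi_withDensity_ofReal (fun _ => ProbabilityTheory.integrable_gaussianPDFReal 0 v)
    (fun _ => ProbabilityTheory.gaussianPDFReal_nonneg 0 v), gaussPi, volume_pi]
  congr with x
  have hconst : (2 * π * (v : ℝ)) ^ (-(Fintype.card ι : ℝ) / 2) =
      (√(2 * π * v))⁻¹ ^ Fintype.card ι := by
    rw [← Real.sqrt_inv, Real.sqrt_eq_rpow, Real.inv_rpow (by positivity), ← Real.rpow_neg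
      (by positivity), ← Real.rpow_mul_natCast (by positivity)]
    congr 1
    ring
  simp only [ProbabilityTheory.gaussianPDFReal, sub_zero, Finset.prod_mul_distrib,
    Finset.prod_const, Finset.card_univ, ← Real.exp_sum, ← Finset.sum_div, Finset.sum_neg_distrib]
  rw [hconst, enorm2_sq]
  simp only [dotProduct, ← sq]

lemma charFun_map_toLp_gaussPi {ι : Type*} [Fintype ι] {σ2 : ℝ} (hσ : 0 < σ2) (t : ι → ℝ) :
    charFun ((gaussPi ι σ2).map (WithLp.toLp 2)) (WithLp.toLp 2 t) =
      Complex.exp (-(σ2 * (t ⬝ᵥ t) / 2 : ℝ)) := by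
  lift σ2 to ℝ≥0 using hσ.le
  rw [gaussPi_eq_pi_gaussianReal ι (by exact_mod_cast hσ.ne'), charFun_pi]
  simp only [ProbabilityTheory.charFun_gaussianReal, ← Complex.exp_sum]
  congr 1
  simp only [dotProduct, Complex.ofReal_zero, mul_zero, zero_mul, zero_sub,
    Finset.sum_neg_distrib, ← Finset.sum_div, ← Finset.mul_sum, Complex.ofReal_div,
    Complex.ofReal_mul, Complex.ofReal_sum, Complex.ofReal_ofNat, sq]

lemma charFun_map_toLp_map_mulVec {ι κ : Type*} [Fintype ι] [Fintype κ] (μ : Measure (κ → ℝ))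
    (M : Matrix ι κ ℝ) (t : ι → ℝ) :
    charFun ((μ.map M.mulVec).map (WithLp.toLp 2)) (WithLp.toLp 2 t) =
      charFun (μ.map (WithLp.toLp 2)) (WithLp.toLp 2 (Mᵀ *ᵥ t)) := by
  rw [Measure.map_map (by fun_prop) (by fun_prop), charFun_apply, charFun_apply,
    integral_map (by fun_prop) (by fun_prop), integral_map (by fun_prop) (by fun_prop)]
  simp only [Function.comp_apply, EuclideanSpace.inner_toLp_toLp, star_trivial, mulVec_transpose,
    dotProduct_mulVec, dotProduct_comm]

lemma isProbabilityMeasure_gaussPi (ι : Type*) [Fintype ι] {σ2 : ℝ} (hσ : 0 < σ2) :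
    IsProbabilityMeasure (gaussPi ι σ2) := by
  lift σ2 to ℝ≥0 using hσ.le
  rw [gaussPi_eq_pi_gaussianReal ι (by exact_mod_cast hσ.ne')]
  infer_instance

lemma map_mulVec_gaussPi_congr {ι κ κ' : Type*} [Finite ι] [Fintype κ] [Fintype κ'] {σ2 : ℝ}
    (hσ : 0 < σ2) {M : Matrix ι κ ℝ} {N : Matrix ι κ' ℝ} (h : M * Mᵀ = N * Nᵀ) :
    (gaussPi κ σ2).map M.mulVec = (gaussPi κ' σ2).map N.mulVec := by
  cases nonempty_fintype ι
  have := isProbabilityMeasure_gaussPi κ hσ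
  have := isProbabilityMeasure_gaussPi κ' hσ
  refine (MeasurableEquiv.toLp 2 (ι → ℝ)).map_measurableEquiv_injective <|
    Measure.ext_of_charFun <| funext fun t => ?_
  rw [MeasurableEquiv.coe_toLp, ← WithLp.toLp_ofLp 2 t, charFun_map_toLp_map_mulVec,
    charFun_map_toLp_map_mulVec, charFun_map_toLp_gaussPi hσ, charFun_map_toLp_gaussPi hσ,
    mulVec_dotProduct_mulVec_self, mulVec_dotProduct_mulVec_self, transpose_transpose,
    transpose_transpose, h]

section GaussCov

variable {ι : Type*} [Fintype ι] [DecidableEq ι]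

lemma gaussCovDens_nonneg {σ2 : ℝ} (hσ : 0 ≤ σ2) (Q : Matrix ι ι ℝ) (x : ι → ℝ) :
    0 ≤ gaussCovDens σ2 Q x := by
  unfold gaussCovDens
  positivity

lemma continuous_gaussCovDens (σ2 : ℝ) :
    Continuous fun p : Matrix ι ι ℝ × (ι → ℝ) => gaussCovDens σ2 p.1 p.2 := by
  unfold gaussCovDens
  fun_prop

lemma measurable_gaussCovDens (σ2 : ℝ) (Q : Matrix ι ι ℝ) : Measurable (gaussCovDens σ2 Q) :=
  ((continuous_gaussCovDens σ2).comp (Continuous.prodMk_right Q)).measurable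

lemma gaussPi_eq_gaussCov_one (σ2 : ℝ) : gaussPi ι σ2 = gaussCov σ2 1 := by
  simp only [gaussPi, gaussCov, gaussCovDens, det_one, Real.sqrt_one, mul_one, one_mulVec,
    enorm2_sq]

lemma gaussCovDens_transpose_mul_self (σ2 : ℝ) (B : Matrix ι ι ℝ) (x : ι → ℝ) :
    gaussCovDens σ2 (Bᵀ * B) x = |B.det| * gaussCovDens σ2 1 (B *ᵥ x) := by
  rw [gaussCovDens, gaussCovDens, ← mulVec_dotProduct_mulVec_self, det_mul, det_transpose,
    Real.sqrt_mul_self_eq_abs, det_one, Real.sqrt_one, one_mulVec]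
  ring

lemma volume_eq_smul_map_mulVec {B : Matrix ι ι ℝ} (hB : B.det ≠ 0) :
    (volume : Measure (ι → ℝ)) =
      ENNReal.ofReal |B.det| • (volume : Measure (ι → ℝ)).map B.mulVec := by
  have hmap := Real.map_matrix_volume_pi_eq_smul_volume_pi hB
  rw [show ⇑(toLin' B) = B.mulVec from funext (toLin'_apply B)] at hmap
  rw [hmap, smul_smul, ← ENNReal.ofReal_mul (abs_nonneg _), ← abs_mul, mul_inv_cancel₀ hB,
    abs_one, ENNReal.ofReal_one, one_smul]

lemma map_mulVec_gaussCov_transpose_mul_self (σ2 : ℝ) {B : Matrix ι ι ℝ} (hB : B.det ≠ 0) :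
    (gaussCov σ2 (Bᵀ * B)).map B.mulVec = gaussPi ι σ2 := by
  have hB_meas : Measurable B.mulVec := by fun_prop
  have hdens : Measurable fun x : ι → ℝ => ENNReal.ofReal (gaussCovDens σ2 1 x) :=
    (measurable_gaussCovDens σ2 1).ennreal_ofReal
  ext S hS
  calc (gaussCov σ2 (Bᵀ * B)).map B.mulVec S
      = ∫⁻ x in B.mulVec ⁻¹' S, ENNReal.ofReal |B.det| *
          ENNReal.ofReal (gaussCovDens σ2 1 (B *ᵥ x)) := by
        rw [Measure.map_apply hB_meas hS, gaussCov, withDensity_apply _ (hB_meas hS)]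
        simp only [gaussCovDens_transpose_mul_self, ENNReal.ofReal_mul (abs_nonneg _)]
    _ = ENNReal.ofReal |B.det| * ∫⁻ y in S, ENNReal.ofReal (gaussCovDens σ2 1 y)
          ∂(volume.map B.mulVec) := by
        rw [lintegral_const_mul' _ _ ENNReal.ofReal_ne_top, setLIntegral_map hS hdens hB_meas]
    _ = ∫⁻ y in S, ENNReal.ofReal (gaussCovDens σ2 1 y) := by
        conv_rhs => rw [volume_eq_smul_map_mulVec hB]
        rw [Measure.restrict_smul, lintegral_smul_measure, smul_eq_mul]
    _ = gaussPi ι σ2 S := by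
        rw [gaussPi_eq_gaussCov_one, gaussCov, withDensity_apply _ hS]

lemma map_mulVec_gaussPi_eq_gaussCov {κ : Type*} [Fintype κ] {σ2 : ℝ} (hσ : 0 < σ2)
    {Q : Matrix ι ι ℝ} (hQ : Q.PosDef) {M : Matrix ι κ ℝ} (hM : M * Mᵀ = Q⁻¹) :
    (gaussPi κ σ2).map M.mulVec = gaussCov σ2 Q := by
  obtain ⟨B, rfl⟩ := exists_eq_transpose_mul_self_of_posSemidef hQ.posSemidef
  have hB : B.det ≠ 0 := fun h => hQ.det_pos.ne' (by rw [det_mul, h, mul_zero])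
  have hMB : M * Mᵀ = B⁻¹ * B⁻¹ᵀ := by rw [hM, Matrix.mul_inv_rev, transpose_nonsing_inv]
  rw [map_mulVec_gaussPi_congr hσ hMB, ← map_mulVec_gaussCov_transpose_mul_self σ2 hB,
    Measure.map_map (by fun_prop) (by fun_prop)]
  have : B⁻¹.mulVec ∘ B.mulVec = id := by
    ext1 x
    simp [mulVec_mulVec, nonsing_inv_mul B hB.isUnit]
  rw [this, Measure.map_id]

lemma integral_gaussCov {E : Type*} [NormedAddCommGroup E] [NormedSpace ℝ E] {σ2 : ℝ}
    (hσ : 0 ≤ σ2) (Q : Matrix ι ι ℝ) (g : (ι → ℝ) → E) :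
    ∫ t, g t ∂gaussCov σ2 Q = ∫ t, gaussCovDens σ2 Q t • g t := by
  rw [gaussCov, integral_withDensity_eq_integral_toReal_smul
    (measurable_gaussCovDens σ2 Q).ennreal_ofReal (ae_of_all _ fun x => ENNReal.ofReal_lt_top)]
  simp only [ENNReal.toReal_ofReal (gaussCovDens_nonneg hσ Q _)]

lemma tendsto_integral_gaussCov {κ E : Type*} [NormedAddCommGroup E] [NormedSpace ℝ E]
    {l : Filter κ} [l.IsCountablyGenerated] {σ2 : ℝ} (hσ : 0 < σ2) {Q : Matrix ι ι ℝ}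
    (hQ : Q.PosDef) {M : κ → Matrix ι ι ℝ} (hM : Tendsto M l (𝓝 Q))
    {g : κ → (ι → ℝ) → E} {g₀ : (ι → ℝ) → E}
    (hg : ∀ j, AEStronglyMeasurable (g j) volume) {K : ℝ} (hgK : ∀ j x, ‖g j x‖ ≤ K)
    (hlim : ∀ x, Tendsto (fun j => g j x) l (𝓝 (g₀ x))) :
    Tendsto (fun j => ∫ x, g j x ∂gaussCov σ2 (M j)) l (𝓝 (∫ x, g₀ x ∂gaussCov σ2 Q)) := by
  simp only [integral_gaussCov hσ.le]
  obtain ⟨c, hc, hcM⟩ := exists_pos_eventually_forall_mul_dotProduct_self_le hQ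
  have hdet : ∀ᶠ j in l, (M j).det ≤ Q.det + 1 :=
    ((Continuous.matrix_det continuous_id).tendsto Q |>.comp hM).eventually_le_const
      (lt_add_one _)
  refine tendsto_integral_filter_of_dominated_convergence
    (fun x => (2 * π * σ2) ^ (-(Fintype.card ι : ℝ) / 2) * √(Q.det + 1) *
      Real.exp (-(c / (2 * σ2)) * (x ⬝ᵥ x)) * K) (.of_forall fun j => ?_) ?_
    (((integrable_exp_neg_mul_dotProduct_self (by positivity)).const_mul _).mul_const _)
    (ae_of_all _ fun x => ?_)
  · exact (measurable_gaussCovDens σ2 (M j)).aestronglyMeasurable.smul (hg j)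
  · filter_upwards [hM.eventually hcM, hdet] with j hcj hdetj
    refine ae_of_all _ fun x => ?_
    rw [norm_smul, Real.norm_of_nonneg (gaussCovDens_nonneg hσ.le _ _)]
    have hexp : -(x ⬝ᵥ M j *ᵥ x) / (2 * σ2) ≤ -(c / (2 * σ2)) * (x ⬝ᵥ x) := by
      rw [neg_mul, div_mul_eq_mul_div, ← neg_div]
      gcongr
      exact hcj x
    unfold gaussCovDens
    gcongr
    exact hgK j x
  · exact (((continuous_gaussCovDens σ2).tendsto (Q, x)).comp
      (hM.prodMk_nhds tendsto_const_nhds)).smul (hlim x)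

end GaussCov

section LeastSquares

variable {X : Matrix (Fin n) (Fin k₁ ⊕ Fin k₂) ℝ}

lemma gram_mulVec_betaU (hX : (Xᵀ * X).PosDef) (Y : Fin n → ℝ) :
    (Xᵀ * X) *ᵥ betaU X Y = Xᵀ *ᵥ Y := by
  rw [betaU, mulVec_mulVec, mul_nonsing_inv _ hX.det_pos.ne'.isUnit, one_mulVec]

lemma betaU_mulVec (hX : (Xᵀ * X).PosDef) (b : Fin k₁ ⊕ Fin k₂ → ℝ) :
    betaU X (X *ᵥ b) = b := by
  rw [betaU, mulVec_mulVec, mulVec_mulVec, Matrix.mul_assoc,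
    nonsing_inv_mul _ hX.det_pos.ne'.isUnit, one_mulVec]

lemma betaU_mulVec_add (hX : (Xᵀ * X).PosDef) (b : Fin k₁ ⊕ Fin k₂ → ℝ) (u : Fin n → ℝ) :
    betaU X (X *ᵥ b + u) = b + betaU X u := by
  calc betaU X (X *ᵥ b + u) = betaU X (X *ᵥ b) + betaU X u := by simp only [betaU, mulVec_add]
    _ = b + betaU X u := by rw [betaU_mulVec hX]

lemma transpose_X1_mulVec (X : Matrix (Fin n) (Fin k₁ ⊕ Fin k₂) ℝ) (v : Fin n → ℝ) :
    (X1 X)ᵀ *ᵥ v = (Xᵀ *ᵥ v) ∘ Sum.inl := rfl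

lemma mulVec_sumElim_zero (X : Matrix (Fin n) (Fin k₁ ⊕ Fin k₂) ℝ) (w : Fin k₁ → ℝ) :
    X *ᵥ Sum.elim w (fun _ => 0) = X1 X *ᵥ w := by
  ext i
  simp [mulVec, dotProduct, Fintype.sum_sum_type, X1]

lemma gram_mulVec_betaR_comp_inl (hX : (Xᵀ * X).PosDef) (Y : Fin n → ℝ) :
    ((Xᵀ * X) *ᵥ betaR X Y) ∘ Sum.inl = (Xᵀ *ᵥ Y) ∘ Sum.inl := by
  have hX1 : ((X1 X)ᵀ * X1 X).PosDef := hX.submatrix Sum.inl_injective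
  rw [← mulVec_mulVec, betaR, mulVec_sumElim_zero, ← transpose_X1_mulVec, mulVec_mulVec,
    mulVec_mulVec, mul_nonsing_inv _ hX1.det_pos.ne'.isUnit, one_mulVec, transpose_X1_mulVec]

lemma betaR_dotProduct_gram_mulVec_sub (hX : (Xᵀ * X).PosDef) (Y : Fin n → ℝ) :
    betaR X Y ⬝ᵥ (Xᵀ * X) *ᵥ (betaR X Y - betaU X Y) = 0 := by
  rw [mulVec_sub, gram_mulVec_betaU hX]
  have hinl := congrFun (gram_mulVec_betaR_comp_inl hX Y)
  have hinr (j : Fin k₂) : betaR X Y (Sum.inr j) = 0 := rfl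
  simp only [Function.comp_apply] at hinl
  simp [dotProduct, Fintype.sum_sum_type, hinl, hinr]

lemma betaR_mulVec_betaU (hX : (Xᵀ * X).PosDef) (Y : Fin n → ℝ) :
    betaR X (X *ᵥ betaU X Y) = betaR X Y := by
  have hX1 : (X1 X)ᵀ *ᵥ X *ᵥ betaU X Y = (X1 X)ᵀ *ᵥ Y := by
    rw [transpose_X1_mulVec, transpose_X1_mulVec, mulVec_mulVec, gram_mulVec_betaU hX]
  rw [betaR, betaR, hX1]

lemma rR_sub_rU (hX : (Xᵀ * X).PosDef) (σ2 : ℝ) (Y : Fin n → ℝ) :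
    rR X σ2 Y - rU X σ2 Y =
      (betaR X Y - betaU X Y) ⬝ᵥ (Xᵀ * X) *ᵥ (betaR X Y - betaU X Y) - 2 * σ2 * k₂ := by
  have horth := betaR_dotProduct_gram_mulVec_sub hX Y
  have hsymm : betaU X Y ⬝ᵥ (Xᵀ * X) *ᵥ betaR X Y = betaR X Y ⬝ᵥ (Xᵀ * X) *ᵥ betaU X Y := by
    rw [dotProduct_mulVec, ← mulVec_transpose, transpose_mul, transpose_transpose,
      dotProduct_comm]
  rw [mulVec_sub, dotProduct_sub] at horth
  rw [rR, rU, mulVec_sub, dotProduct_sub, sub_dotProduct, sub_dotProduct, hsymm]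
  linarith

lemma lamHat_eq_inv (α σ2 : ℝ) (X : Matrix (Fin n) (Fin k₁ ⊕ Fin k₂) ℝ) (Y : Fin n → ℝ) :
    lamHat α σ2 X Y = (1 + Real.exp (α / σ2 * (rR X σ2 Y - rU X σ2 Y)))⁻¹ := by
  have hexp : Real.exp (-(α * rU X σ2 Y) / σ2) =
      Real.exp (-(α * rR X σ2 Y) / σ2) * Real.exp (α / σ2 * (rR X σ2 Y - rU X σ2 Y)) := by
    rw [← Real.exp_add]
    ring_nf
  rw [lamHat, hexp, ← mul_one_add, div_mul_cancel_left₀ (Real.exp_ne_zero _)]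

lemma lamHat_nonneg (α σ2 : ℝ) (X : Matrix (Fin n) (Fin k₁ ⊕ Fin k₂) ℝ) (Y : Fin n → ℝ) :
    0 ≤ lamHat α σ2 X Y := by
  unfold lamHat
  positivity

lemma lamHat_le (hX : (Xᵀ * X).PosDef) (α : ℝ) {σ2 : ℝ} (hσ : σ2 ≠ 0) (Y : Fin n → ℝ) :
    lamHat α σ2 X Y ≤ Real.exp (2 * α * k₂ -
      α / σ2 * ((betaR X Y - betaU X Y) ⬝ᵥ (Xᵀ * X) *ᵥ (betaR X Y - betaU X Y))) := by
  calc lamHat α σ2 X Y ≤ (Real.exp (α / σ2 * (rR X σ2 Y - rU X σ2 Y)))⁻¹ := by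
        rw [lamHat_eq_inv]
        gcongr
        exact le_add_of_nonneg_left zero_le_one
    _ = _ := by
        rw [← Real.exp_neg, rR_sub_rU hX]
        congr 1
        field_simp
        ring

lemma mavg_eq_betaU_add (α σ2 : ℝ) (X : Matrix (Fin n) (Fin k₁ ⊕ Fin k₂) ℝ) (Y : Fin n → ℝ) :
    mavg α σ2 X Y = betaU X Y + lamHat α σ2 X Y • (betaR X Y - betaU X Y) := by
  rw [mavg]
  module

lemma mavg_mulVec_betaU (hX : (Xᵀ * X).PosDef) (α σ2 : ℝ) (Y : Fin n → ℝ) :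
    mavg α σ2 X (X *ᵥ betaU X Y) = mavg α σ2 X Y := by
  simp only [mavg, lamHat_eq_inv, rR_sub_rU hX, betaR_mulVec_betaU hX, betaU_mulVec hX]

lemma continuous_betaU (X : Matrix (Fin n) (Fin k₁ ⊕ Fin k₂) ℝ) : Continuous (betaU X) := by
  unfold betaU
  fun_prop

lemma continuous_betaR (X : Matrix (Fin n) (Fin k₁ ⊕ Fin k₂) ℝ) : Continuous (betaR X) := by
  refine continuous_pi (Sum.rec (fun i => ?_) fun _ => continuous_const)
  exact (continuous_apply i).comp
    (by fun_prop : Continuous fun Y => ((X1 X)ᵀ * X1 X)⁻¹ *ᵥ (X1 X)ᵀ *ᵥ Y)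

lemma continuous_lamHat (α σ2 : ℝ) (X : Matrix (Fin n) (Fin k₁ ⊕ Fin k₂) ℝ) :
    Continuous (lamHat α σ2 X) := by
  have := continuous_betaU X
  have := continuous_betaR X
  unfold lamHat rR rU
  exact Continuous.div (by fun_prop) (by fun_prop) fun Y => by positivity

lemma continuous_mavg (α σ2 : ℝ) (X : Matrix (Fin n) (Fin k₁ ⊕ Fin k₂) ℝ) :
    Continuous (mavg α σ2 X) := by
  have := continuous_betaU X
  have := continuous_betaR X
  have := continuous_lamHat α σ2 X
  unfold mavg
  fun_prop

end LeastSquares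

lemma enorm2_smul_betaU_comp_inr_le (s : ℝ) (X : Matrix (Fin n) (Fin k₁ ⊕ Fin k₂) ℝ)
    (Y : Fin n → ℝ) :
    enorm2 (s • (betaU X Y ∘ Sum.inr)) ≤ enorm2 (s • (betaR X Y - betaU X Y)) := by
  calc enorm2 (s • (betaU X Y ∘ Sum.inr))
      = enorm2 ((s • (betaR X Y - betaU X Y)) ∘ Sum.inr) := by
        simp [enorm2, betaR]
    _ ≤ _ := enorm2_comp_le Sum.inr_injective _

lemma enorm2_smul_mavg_sub_betaU_le {X : Matrix (Fin n) (Fin k₁ ⊕ Fin k₂) ℝ}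
    (hX : (Xᵀ * X).PosDef) {s α σ2 c : ℝ} (hs : s ≠ 0) (hα : 0 ≤ α) (hσ : 0 < σ2)
    (hc : ∀ x, c * (x ⬝ᵥ x) ≤ x ⬝ᵥ ((s ^ 2)⁻¹ • (Xᵀ * X)) *ᵥ x) (Y : Fin n → ℝ) :
    enorm2 (s • (mavg α σ2 X Y - betaU X Y)) ≤
      Real.exp (2 * α * k₂) * (enorm2 (s • (betaR X Y - betaU X Y)) *
        Real.exp (-(α / σ2 * c) * enorm2 (s • (betaR X Y - betaU X Y)) ^ 2)) := by
  set δ := betaR X Y - betaU X Y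
  have hquad : c * enorm2 (s • δ) ^ 2 ≤ δ ⬝ᵥ (Xᵀ * X) *ᵥ δ := by
    rw [enorm2_sq]
    refine (hc (s • δ)).trans_eq ?_
    simp only [smul_mulVec, mulVec_smul, smul_dotProduct, dotProduct_smul, smul_eq_mul]
    field_simp
  have hlam : lamHat α σ2 X Y ≤
      Real.exp (2 * α * k₂) * Real.exp (-(α / σ2 * c) * enorm2 (s • δ) ^ 2) := by
    rw [← Real.exp_add]
    refine (lamHat_le hX α hσ.ne' Y).trans (Real.exp_le_exp.mpr ?_)
    have := mul_le_mul_of_nonneg_left hquad (by positivity : 0 ≤ α / σ2)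
    linarith
  calc enorm2 (s • (mavg α σ2 X Y - betaU X Y)) = lamHat α σ2 X Y * enorm2 (s • δ) := by
        rw [mavg_eq_betaU_add, add_sub_cancel_left, smul_comm, enorm2_smul,
          abs_of_nonneg (lamHat_nonneg α σ2 X Y)]
    _ ≤ _ := by
        rw [mul_left_comm, mul_comm (lamHat α σ2 X Y)]
        gcongr
        exact Real.sqrt_nonneg _

/-- The scaled error `s(β̃ − β)` of the model averaging estimator as a function of the scaled
error `t = s(β̂(U) − β)` of the unrestricted one. As `β̃` depends on the data only through `β̂(U)`,
it may be evaluated at the fitted values `X(β + t/s)` instead of the data. -/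
def scaledError (s α σ2 : ℝ) (X : Matrix (Fin n) (Fin k₁ ⊕ Fin k₂) ℝ)
    (β t : Fin k₁ ⊕ Fin k₂ → ℝ) : Fin k₁ ⊕ Fin k₂ → ℝ :=
  s • (mavg α σ2 X (X *ᵥ (β + s⁻¹ • t)) - β)

lemma continuous_scaledError (s α σ2 : ℝ) (X : Matrix (Fin n) (Fin k₁ ⊕ Fin k₂) ℝ)
    (β : Fin k₁ ⊕ Fin k₂ → ℝ) : Continuous (scaledError s α σ2 X β) := by
  have := continuous_mavg α σ2 X
  unfold scaledError
  fun_prop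

lemma scaledError_smul_betaU_sub {X : Matrix (Fin n) (Fin k₁ ⊕ Fin k₂) ℝ}
    (hX : (Xᵀ * X).PosDef) {s : ℝ} (hs : s ≠ 0) (α σ2 : ℝ) (β : Fin k₁ ⊕ Fin k₂ → ℝ)
    (Y : Fin n → ℝ) :
    scaledError s α σ2 X β (s • (betaU X Y - β)) = s • (mavg α σ2 X Y - β) := by
  rw [scaledError, inv_smul_smul₀ hs, add_sub_cancel, mavg_mulVec_betaU hX]

lemma map_smul_betaU_sub_Pmeas {X : Matrix (Fin n) (Fin k₁ ⊕ Fin k₂) ℝ}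
    (hX : (Xᵀ * X).PosDef) {s σ2 : ℝ} (hs : s ≠ 0) (hσ : 0 < σ2) (β : Fin k₁ ⊕ Fin k₂ → ℝ) :
    (Pmeas X β σ2).map (fun Y => s • (betaU X Y - β)) =
      gaussCov σ2 ((s ^ 2)⁻¹ • (Xᵀ * X)) := by
  have hdet : IsUnit (Xᵀ * X).det := hX.det_pos.ne'.isUnit
  have hcov : (s • ((Xᵀ * X)⁻¹ * Xᵀ)) * (s • ((Xᵀ * X)⁻¹ * Xᵀ))ᵀ = ((s ^ 2)⁻¹ • (Xᵀ * X))⁻¹ := by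
    rw [transpose_smul, Matrix.smul_mul, Matrix.mul_smul, smul_smul, ← sq,
      gram_inv_mul_transpose_mul_transpose hdet]
    refine (inv_eq_left_inv ?_).symm
    rw [Matrix.smul_mul, Matrix.mul_smul, smul_smul, mul_inv_cancel₀ (pow_ne_zero 2 hs), one_smul,
      nonsing_inv_mul _ hdet]
  have hbetaU := continuous_betaU X
  rw [← map_mulVec_gaussPi_eq_gaussCov hσ (hX.smul (by positivity)) hcov, Pmeas,
    Measure.map_map (by fun_prop) (by fun_prop)]
  congr with u
  simp only [Function.comp_apply, betaU_mulVec_add hX, add_sub_cancel_left, smul_mulVec]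
  rw [betaU, mulVec_mulVec]

lemma map_smul_mavg_sub_Pmeas {X : Matrix (Fin n) (Fin k₁ ⊕ Fin k₂) ℝ}
    (hX : (Xᵀ * X).PosDef) {s σ2 : ℝ} (hs : s ≠ 0) (hσ : 0 < σ2) (α : ℝ)
    (β : Fin k₁ ⊕ Fin k₂ → ℝ) :
    (Pmeas X β σ2).map (fun Y => s • (mavg α σ2 X Y - β)) =
      (gaussCov σ2 ((s ^ 2)⁻¹ • (Xᵀ * X))).map (scaledError s α σ2 X β) := by
  have := continuous_betaU X
  rw [← map_smul_betaU_sub_Pmeas hX hs hσ β,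
    Measure.map_map (continuous_scaledError s α σ2 X β).measurable (by fun_prop)]
  congr with Y
  rw [Function.comp_apply, scaledError_smul_betaU_sub hX hs]

lemma scaledError_sub_self {X : Matrix (Fin n) (Fin k₁ ⊕ Fin k₂) ℝ} (hX : (Xᵀ * X).PosDef)
    {s : ℝ} (hs : s ≠ 0) (α σ2 : ℝ) (β t : Fin k₁ ⊕ Fin k₂ → ℝ) :
    scaledError s α σ2 X β t - t = s • (mavg α σ2 X (X *ᵥ (β + s⁻¹ • t)) -
      betaU X (X *ᵥ (β + s⁻¹ • t))) := by
  rw [betaU_mulVec hX, scaledError, ← sub_sub, smul_sub s _ (s⁻¹ • t), smul_inv_smul₀ hs]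

lemma tendsto_scaledError {κ : Type*} {l : Filter κ} {m : κ → ℕ}
    {X : ∀ j, Matrix (Fin (m j)) (Fin k₁ ⊕ Fin k₂) ℝ} {s : κ → ℝ}
    {Q : Matrix (Fin k₁ ⊕ Fin k₂) (Fin k₁ ⊕ Fin k₂) ℝ} (hQ : Q.PosDef)
    (hX : ∀ᶠ j in l, ((X j)ᵀ * X j).PosDef) (hs : ∀ᶠ j in l, s j ≠ 0)
    (hlim : Tendsto (fun j => (s j ^ 2)⁻¹ • ((X j)ᵀ * X j)) l (𝓝 Q))
    {α σ2 : ℝ} (hα : 0 < α) (hσ : 0 < σ2) {β : κ → Fin k₁ ⊕ Fin k₂ → ℝ}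
    (hβ : Tendsto (fun j => enorm2 (s j • (β j ∘ Sum.inr))) l atTop)
    (t : Fin k₁ ⊕ Fin k₂ → ℝ) :
    Tendsto (fun j => scaledError (s j) α σ2 (X j) (β j) t) l (𝓝 t) := by
  obtain ⟨c, hc, hcM⟩ := exists_pos_eventually_forall_mul_dotProduct_self_le hQ
  let Y (j) := X j *ᵥ (β j + (s j)⁻¹ • t)
  let gap (j) := enorm2 (s j • (betaR (X j) (Y j) - betaU (X j) (Y j)))
  have hgap : Tendsto gap l atTop := by
    refine tendsto_atTop_mono' l ?_ (tendsto_enorm2_add_const_atTop hβ (t ∘ Sum.inr))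
    filter_upwards [hX, hs] with j hXj hsj
    refine (congrArg enorm2 ?_).trans_le (enorm2_smul_betaU_comp_inr_le (s j) (X j) (Y j))
    rw [betaU_mulVec hXj, Pi.add_comp, smul_add, Pi.smul_comp, smul_inv_smul₀ hsj]
  have hbound := ((tendsto_mul_exp_neg_mul_sq_atTop (by positivity : 0 < α / σ2 * c)).comp
    hgap).const_mul (Real.exp (2 * α * k₂))
  rw [mul_zero] at hbound
  refine tendsto_of_tendsto_enorm2_sub
    (squeeze_zero' (.of_forall fun j => Real.sqrt_nonneg _) ?_ hbound)
  filter_upwards [hX, hs, hlim.eventually hcM] with j hXj hsj hcj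
  rw [scaledError_sub_self hXj hsj]
  exact enorm2_smul_mavg_sub_betaU_le hXj hsj hα.le hσ hcj (Y j)

/-- if `‖√n β₂⁽ⁿ⁾‖ → ∞`, the distribution of `√n(β̃ − β⁽ⁿ⁾)` under
`P_{n,β⁽ⁿ⁾,σ}` converges weakly to `N(0, σ²Q⁻¹)`. -/
theorem statement6 {k₁ k₂ : ℕ} (hk₁ : 0 < k₁) (hk₂ : 0 < k₂)
    (X : ∀ n : ℕ, Matrix (Fin n) (Fin k₁ ⊕ Fin k₂) ℝ)
    (hX : ∀ n, k₁ + k₂ ≤ n → (X n).rank = k₁ + k₂)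
    (Q : Matrix (Fin k₁ ⊕ Fin k₂) (Fin k₁ ⊕ Fin k₂) ℝ) (hQ : Q.PosDef)
    (hlim : Tendsto (fun n : ℕ => (n : ℝ)⁻¹ • ((X n)ᵀ * X n)) atTop (𝓝 Q))
    (σ α : ℝ) (hσ : 0 < σ) (hα : 0 < α)
    (β : ∀ _ : ℕ, (Fin k₁ ⊕ Fin k₂) → ℝ)
    (hβ : Tendsto (fun n : ℕ => enorm2 (Real.sqrt n • (β n ∘ Sum.inr))) atTop atTop) :
    ∀ f : BoundedContinuousFunction ((Fin k₁ ⊕ Fin k₂) → ℝ) ℝ,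
      Tendsto (fun n : ℕ =>
          ∫ t, f t ∂((Pmeas (X n) (β n) (σ ^ 2)).map
            (fun Y => Real.sqrt n • (mavg α (σ ^ 2) (X n) Y - β n))))
        atTop (𝓝 (∫ t, f t ∂(gaussCov (σ ^ 2) Q))) := by
  intro f
  have hσ2 : 0 < σ ^ 2 := by positivity
  have hgram : ∀ᶠ n in atTop, ((X n)ᵀ * X n).PosDef :=
    (eventually_ge_atTop (k₁ + k₂)).mono fun n hn =>
      posDef_transpose_mul_self_of_rank_eq_card (by simpa using hX n hn)
  have hsqrt : ∀ᶠ n : ℕ in atTop, √(n : ℝ) ≠ 0 :=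
    (eventually_gt_atTop 0).mono fun n hn => (Real.sqrt_pos.mpr (Nat.cast_pos.mpr hn)).ne'
  have hgram_lim : Tendsto (fun n : ℕ => (√(n : ℝ) ^ 2)⁻¹ • ((X n)ᵀ * X n)) atTop (𝓝 Q) := by
    simpa only [Real.sq_sqrt (Nat.cast_nonneg _)] using hlim
  have herror := tendsto_scaledError hQ hgram hsqrt hgram_lim hα hσ2 hβ
  have hcont (n : ℕ) := continuous_scaledError (√(n : ℝ)) α (σ ^ 2) (X n) (β n)
  refine (tendsto_integral_gaussCov hσ2 hQ hgram_lim
    (fun n => (f.continuous.comp (hcont n)).aestronglyMeasurable)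
    (fun n t => f.norm_coe_le_norm _)
    (fun t => (f.continuous.tendsto t).comp (herror t))).congr' ?_
  filter_upwards [hgram, hsqrt] with n hXn hsn
  rw [map_smul_mavg_sub_Pmeas hXn hsn hσ2, integral_map (hcont n).aemeasurable
    f.continuous.aestronglyMeasurable]
  rfl

end
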